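/- arXiv:2507.13098 — 3 statements merged into one kernel-verified Lean document; each statement's English description precedes it below -/
import Mathlib

section
/- Let (u, P, N) be smooth fields on [0,L] and suppose that the first variation of Ψ vanishes for every smooth variation (δu, δP, δN) compactly supported in the open interval (0,L); that is, (d/ds)|_{s=0} Ψ(u + s δu, P + s δP, N + s δN) = 0 for all such variations. Then (u, P, N) satisfies the non-holonomic Euler–Lagrange equations (EL1), (EL2), (EL3), (EL4) at every point of (0,L). -/
open Filter Set intervalIntegral

/-- The Greek (transversal) indices: the Lean indices `1, 2 : Fin 3` play the role of the
paper indices `2, 3`; the Lean index `0` plays the role of the longitudinal index `1`. -/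
def greek : Finset (Fin 3) := {1, 2}

/-- The non-holonomic total energy `Ψ(u, P, N)` of the 1D-in-3D beam model. -/
noncomputable def PsiNonHolo (L a b c d e ℓ : ℝ)
    (f₀ : ℝ → Fin 3 → ℝ) (f₁ : ℝ → Fin 3 → Fin 3 → ℝ)
    (f₂ : ℝ → Fin 3 → Fin 3 → Fin 3 → ℝ)
    (u : ℝ → Fin 3 → ℝ) (P : ℝ → Fin 3 → Fin 3 → ℝ)
    (N : ℝ → Fin 3 → Fin 3 → Fin 3 → ℝ) : ℝ :=
  ∫ t in (0:ℝ)..L,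
    (a / 8 * ∑ i : Fin 3, ∑ j : Fin 3, (P t i j + P t j i) ^ 2
      + a * ℓ ^ 4 / 96 * ∑ i : Fin 3, ∑ j : Fin 3, ∑ α ∈ greek, (N t i j α + N t j i α) ^ 2
      + b / 2 * ∑ i : Fin 3, ∑ j : Fin 3, ∑ k : Fin 3, (N t i j k) ^ 2
      + c / 2 * ∑ i : Fin 3, ∑ j : Fin 3, ∑ k : Fin 3, (deriv (fun s => N s i j k) t) ^ 2
      + d / 2 * ∑ i : Fin 3, (deriv (fun s => u s i) t - P t i 0) ^ 2
      + d * ℓ ^ 4 / 24 * ∑ i : Fin 3, ∑ α ∈ greek,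
          (deriv (fun s => P s i α) t - N t i 0 α) ^ 2
      + e / 2 * ∑ i : Fin 3, ∑ j : Fin 3, (deriv (fun s => P s i j) t - N t i j 0) ^ 2
      + e * ℓ ^ 4 / 24 * ∑ i : Fin 3, ∑ j : Fin 3, ∑ α ∈ greek,
          (deriv (fun s => N s i j α) t) ^ 2
      - ∑ i : Fin 3, f₀ t i * u t i
      - ∑ i : Fin 3, ∑ j : Fin 3, f₁ t i j * P t i j
      - ∑ i : Fin 3, ∑ j : Fin 3, ∑ k : Fin 3, f₂ t i j k * N t i j k)

/-!
Along a variation `q + s η` a quadratic Lagrangian `B (q, q') (q, q') / 2 - f q` is a quadratic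
polynomial in `s`, so the first variation is the integral of `B (q, q') (η, η') - f η`. For
`η = φ w` with a scalar test function `φ` and a fixed direction `w`, integration by parts and the
fundamental lemma give `B (q, q') (w, 0) - B (q', q'') (0, w) = f w`. The energy `Ψ` is the action
of such a Lagrangian on the curve `q = (u, P, N)`, and the directions `w` of the standard basis give
the component equations.
-/

section FundamentalLemma

open MeasureTheory

variable {F : Type*} [NormedAddCommGroup F] [NormedSpace ℝ F] [CompleteSpace F]

theorem eqOn_zero_of_forall_integral_contDiff_smul_eq_zero {E : Type*} [NormedAddCommGroup E]
    [NormedSpace ℝ E] [FiniteDimensional ℝ E] [MeasurableSpace E] [BorelSpace E] {μ : Measure E}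
    [IsLocallyFiniteMeasure μ] [μ.IsOpenPosMeasure] {U : Set E} (hU : IsOpen U) {g : E → F}
    (hg : ContinuousOn g U)
    (h : ∀ φ : E → ℝ, ContDiff ℝ (⊤ : ℕ∞) φ → HasCompactSupport φ → tsupport φ ⊆ U →
      ∫ x, φ x • g x ∂μ = 0) :
    EqOn g 0 U := by
  have ae_zero : ∀ᵐ x ∂μ, x ∈ U → g x = 0 :=
    hU.ae_eq_zero_of_integral_contDiff_smul_eq_zero (hg.locallyIntegrableOn hU.measurableSet) h
  exact Measure.eqOn_open_of_ae_eq ((ae_restrict_iff' hU.measurableSet).2 ae_zero) hU hg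
    continuousOn_const

theorem eqOn_Ioo_of_forall_integral_smul_add_deriv_smul_eq_zero {a b : ℝ} {G K K' : ℝ → F}
    (hG : ContinuousOn G (uIcc a b)) (hK : ∀ t ∈ uIcc a b, HasDerivAt K (K' t) t)
    (hK' : ContinuousOn K' (uIcc a b))
    (h : ∀ φ : ℝ → ℝ, ContDiff ℝ (⊤ : ℕ∞) φ → tsupport φ ⊆ Ioo a b →
      ∫ t in a..b, (φ t • G t + deriv φ t • K t) = 0) :
    EqOn G K' (Ioo a b) := by
  have hKc : ContinuousOn K (uIcc a b) := fun t ht ↦ (hK t ht).continuousAt.continuousWithinAt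
  suffices EqOn (fun t ↦ G t - K' t) 0 (Ioo a b) from fun t ht ↦ sub_eq_zero.1 (this ht)
  refine eqOn_zero_of_forall_integral_contDiff_smul_eq_zero (μ := volume) isOpen_Ioo
    ((hG.sub hK').mono (Ioo_subset_Icc_self.trans Icc_subset_uIcc)) fun φ hφ _ hsupp ↦ ?_
  have hφc : ContinuousOn φ (uIcc a b) := hφ.continuous.continuousOn
  have hφ' : Continuous (deriv φ) := hφ.continuous_deriv (by norm_num)
  have by_parts : ∫ t in a..b, φ t • K' t = -∫ t in a..b, deriv φ t • K t := by
    have hφa : φ a = 0 := image_eq_zero_of_notMem_tsupport fun ha ↦ lt_irrefl a (hsupp ha).1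
    have hφb : φ b = 0 := image_eq_zero_of_notMem_tsupport fun hb ↦ lt_irrefl b (hsupp hb).2
    simpa [hφa, hφb] using integral_smul_deriv_eq_deriv_smul_of_hasDerivAt hφc hKc
      (fun t _ ↦ (hφ.differentiable (by norm_num) t).hasDerivAt)
      (fun t ht ↦ hK t (Ioo_subset_Icc_self ht))
      (hφ'.intervalIntegrable a b) hK'.intervalIntegrable
  have support_subset : Function.support (fun t ↦ φ t • (G t - K' t)) ⊆ Ioc a b :=
    (Function.support_smul_subset_left _ _).trans <|
      (subset_tsupport φ).trans <| hsupp.trans Ioo_subset_Ioc_self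
  calc ∫ t, φ t • (G t - K' t)
      = ∫ t in a..b, φ t • (G t - K' t) :=
        (integral_eq_integral_of_support_subset support_subset).symm
    _ = (∫ t in a..b, φ t • G t) - ∫ t in a..b, φ t • K' t := by
        simp only [smul_sub]
        exact integral_sub (hφc.smul hG).intervalIntegrable (hφc.smul hK').intervalIntegrable
    _ = ∫ t in a..b, (φ t • G t + deriv φ t • K t) := by
        rw [by_parts, sub_neg_eq_add]
        exact (integral_add (hφc.smul hG).intervalIntegrable
          (hφ'.continuousOn.smul hKc).intervalIntegrable).symm
    _ = 0 := h φ hφ hsupp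

end FundamentalLemma

section QuadraticLagrangian

variable {E : Type*} [NormedAddCommGroup E] [NormedSpace ℝ E]

/-- The action on `[a, b]` of the curve `q` for the Lagrangian `B (q, q') (q, q') / 2 - f q`: a
quadratic stored energy, given by its bilinear form `B` on position-velocity pairs, minus the
potential of the load `f`. -/
noncomputable def quadraticAction (B : E × E →L[ℝ] E × E →L[ℝ] ℝ) (f : ℝ → E →L[ℝ] ℝ) (a b : ℝ)
    (q : ℝ → E) : ℝ :=
  ∫ t in a..b, (B (q t, deriv q t) (q t, deriv q t) / 2 - f t (q t))

/-- The Euler operator of the stored energy `B (q, q') (q, q') / 2`, tested against the direction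
`w`: the generalized force minus the rate of change of the momentum, at a point where the curve
has position `x`, velocity `x'` and acceleration `x''`. -/
noncomputable def eulerOperator (B : E × E →L[ℝ] E × E →L[ℝ] ℝ) (x x' x'' w : E) : ℝ :=
  B (x, x') (w, 0) - B (x', x'') (0, w)

variable {B : E × E →L[ℝ] E × E →L[ℝ] ℝ} {f : ℝ → E →L[ℝ] ℝ} {a b : ℝ} {q : ℝ → E}

theorem hasDerivAt_quadraticAction_add_smul (hB : ∀ z h, B z h = B h z) (hf : Continuous f)
    (hq : ContDiff ℝ 1 q) {η : ℝ → E} (hη : ContDiff ℝ 1 η) :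
    HasDerivAt (fun s : ℝ ↦ quadraticAction B f a b fun t ↦ q t + s • η t)
      (∫ t in a..b, (B (q t, deriv q t) (η t, deriv η t) - f t (η t))) 0 := by
  have : Continuous (deriv q) := hq.continuous_deriv le_rfl
  have : Continuous (deriv η) := hη.continuous_deriv le_rfl
  have expansion (s : ℝ) : quadraticAction B f a b (fun t ↦ q t + s • η t) =
      quadraticAction B f a b q
        + s * (∫ t in a..b, (B (q t, deriv q t) (η t, deriv η t) - f t (η t)))
        + s ^ 2 * quadraticAction B 0 a b η := by
    have jet_eq (t : ℝ) : (q t + s • η t, deriv (fun r ↦ q r + s • η r) t) =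
        (q t, deriv q t) + s • (η t, deriv η t) := by
      have hqt := (hq.differentiable one_ne_zero t).hasDerivAt
      have hηt := (hη.differentiable one_ne_zero t).hasDerivAt
      rw [(hqt.fun_add (hηt.fun_const_smul s)).deriv, Prod.smul_mk, Prod.mk_add_mk]
    unfold quadraticAction
    rw [← integral_const_mul, ← integral_const_mul, ← integral_add, ← integral_add]
    · congr 1 with t
      rw [jet_eq t]
      simp only [map_add, map_smul, add_apply, smul_apply, smul_eq_mul,
        hB (η t, deriv η t) (q t, deriv q t), Pi.zero_apply, zero_apply]
      ring
    all_goals exact Continuous.intervalIntegrable (by fun_prop) a b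
  simp only [expansion]
  simpa using (((hasDerivAt_id (0 : ℝ)).mul_const _).const_add _).fun_add
    (((hasDerivAt_id (0 : ℝ)).pow 2).mul_const _)

theorem eulerOperator_eq_of_quadraticAction_stationary (hB : ∀ z h, B z h = B h z)
    (hf : Continuous f) (hq : ContDiff ℝ 2 q) (w : E)
    (hstat : ∀ φ : ℝ → ℝ, ContDiff ℝ (⊤ : ℕ∞) φ → tsupport φ ⊆ Ioo a b →
      deriv (fun s : ℝ ↦ quadraticAction B f a b fun t ↦ q t + s • φ t • w) 0 = 0)
    {t : ℝ} (ht : t ∈ Ioo a b) :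
    eulerOperator B (q t) (deriv q t) (iteratedDeriv 2 q t) w = f t w := by
  have hq' : ContDiff ℝ 1 (deriv q) := ContDiff.deriv' hq
  have : Continuous (iteratedDeriv 2 q) := hq.continuous_iteratedDeriv 2 le_rfl
  have momentum (t : ℝ) : HasDerivAt (fun r ↦ B (q r, deriv q r) (0, w))
      (B (deriv q t, iteratedDeriv 2 q t) (0, w)) t := by
    have hqt := (hq.differentiable two_ne_zero t).hasDerivAt
    have hq't := (hq'.differentiable one_ne_zero t).hasDerivAt
    rw [iteratedDeriv_succ, iteratedDeriv_one]
    exact (B.flip (0, w)).hasFDerivAt.comp_hasDerivAt t (hqt.prodMk hq't)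
  rw [eulerOperator, sub_eq_iff_eq_add', ← sub_eq_iff_eq_add]
  refine eqOn_Ioo_of_forall_integral_smul_add_deriv_smul_eq_zero
    (G := fun t ↦ B (q t, deriv q t) (w, 0) - f t w) (Continuous.continuousOn (by fun_prop))
    (fun t _ ↦ momentum t) (Continuous.continuousOn (by fun_prop)) (fun φ hφ hsupp ↦ ?_) ht
  have hφ1 : ContDiff ℝ 1 φ := hφ.of_le (by norm_num)
  have jet_variation (t : ℝ) : (φ t • w, deriv (fun r ↦ φ r • w) t) =
      φ t • (w, (0 : E)) + deriv φ t • ((0 : E), w) := by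
    rw [((hφ1.differentiable one_ne_zero t).hasDerivAt.smul_const w).deriv]
    simp
  rw [← hstat φ hφ hsupp, (hasDerivAt_quadraticAction_add_smul (η := fun r ↦ φ r • w) hB hf
    (hq.of_le one_le_two) (hφ1.smul contDiff_const)).deriv]
  congr 1 with t
  rw [jet_variation]
  simp only [map_add, map_smul, smul_eq_mul]
  ring

end QuadraticLagrangian

theorem iteratedDeriv_clm_comp {𝕜 E F : Type*} [NontriviallyNormedField 𝕜]
    [NormedAddCommGroup E] [NormedSpace 𝕜 E] [NormedAddCommGroup F] [NormedSpace 𝕜 F]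
    (π : E →L[𝕜] F) {n : ℕ} {q : 𝕜 → E} {t : 𝕜} (hq : ContDiffAt 𝕜 n q t) :
    iteratedDeriv n (fun s ↦ π (q s)) t = π (iteratedDeriv n q t) := by
  simp only [iteratedDeriv_eq_iteratedFDeriv]
  change iteratedFDeriv 𝕜 n (π ∘ q) t _ = _
  rw [π.iteratedFDeriv_comp_left hq le_rfl]
  rfl

section Beam

/-- The kinematic descriptors `(u, P, N)` at a point of the beam; also used for the dual loads
`(f₀, f₁, f₂)`, through the componentwise pairing. -/
abbrev BeamState : Type :=
  (Fin 3 → ℝ) × (Fin 3 → Fin 3 → ℝ) × (Fin 3 → Fin 3 → Fin 3 → ℝ)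

/-- The virtual work of the internal forces of the beam: the symmetric bilinear form whose
quadratic form is twice the stored energy density in `Ψ`, on pairs `((u, P, N), (u', P', N'))`. -/
noncomputable def internalWork (a b c d e ℓ : ℝ) :
    BeamState × BeamState → BeamState × BeamState → ℝ
  | ((_, P, N), (u', P', N')), ((_, p, n), (v', p', n')) =>
    a / 4 * ∑ i, ∑ j, (P i j + P j i) * (p i j + p j i)
      + a * ℓ ^ 4 / 48 * ∑ i, ∑ j, ∑ α ∈ greek, (N i j α + N j i α) * (n i j α + n j i α)
      + b * ∑ i, ∑ j, ∑ k, N i j k * n i j k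
      + c * ∑ i, ∑ j, ∑ k, N' i j k * n' i j k
      + d * ∑ i, (u' i - P i 0) * (v' i - p i 0)
      + d * ℓ ^ 4 / 12 * ∑ i, ∑ α ∈ greek, (P' i α - N i 0 α) * (p' i α - n i 0 α)
      + e * ∑ i, ∑ j, (P' i j - N i j 0) * (p' i j - n i j 0)
      + e * ℓ ^ 4 / 12 * ∑ i, ∑ j, ∑ α ∈ greek, N' i j α * n' i j α

theorem mem_greek_iff {α : Fin 3} : α ∈ greek ↔ α ≠ 0 := by
  revert α
  decide

variable (a b c d e ℓ : ℝ)

theorem internalWork_comm (z h : BeamState × BeamState) :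
    internalWork a b c d e ℓ z h = internalWork a b c d e ℓ h z := by
  simp only [internalWork, mul_comm]

theorem isLinearMap_internalWork (z : BeamState × BeamState) :
    IsLinearMap ℝ (internalWork a b c d e ℓ z) where
  map_add g h := by
    simp only [internalWork, Pi.add_apply, mul_add, mul_sub,
      Finset.sum_add_distrib, Finset.sum_sub_distrib]
    ring
  map_smul r h := by
    simp only [internalWork, Prod.smul_fst, Prod.smul_snd, Pi.smul_apply, smul_eq_mul,
      ← mul_add, ← mul_sub, mul_left_comm _ r, ← Finset.mul_sum]

theorem isBilinearMap_internalWork : IsBilinearMap ℝ (internalWork a b c d e ℓ) where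
  add_left z z' h := by
    simp only [internalWork_comm _ _ _ _ _ _ _ h, (isLinearMap_internalWork a b c d e ℓ h).map_add]
  smul_left r z h := by
    simp only [internalWork_comm _ _ _ _ _ _ _ h, (isLinearMap_internalWork a b c d e ℓ h).map_smul]
  add_right z := (isLinearMap_internalWork a b c d e ℓ z).map_add
  smul_right r z := (isLinearMap_internalWork a b c d e ℓ z).map_smul r

/-- `internalWork` as a continuous bilinear form. -/
noncomputable def internalWorkForm : BeamState × BeamState →L[ℝ] BeamState × BeamState →L[ℝ] ℝ :=
  (isBilinearMap_internalWork a b c d e ℓ).toContinuousBilinearMap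

/-- The component `u^i`, as a linear functional of the state. -/
def coordU (i : Fin 3) : BeamState →L[ℝ] ℝ := .proj i ∘L .fst ℝ _ _

/-- The component `P^i_j`, as a linear functional of the state. -/
def coordP (i j : Fin 3) : BeamState →L[ℝ] ℝ := .proj j ∘L .proj i ∘L .fst ℝ _ _ ∘L .snd ℝ _ _

/-- The component `N^i_{jk}`, as a linear functional of the state. -/
def coordN (i j k : Fin 3) : BeamState →L[ℝ] ℝ :=
  .proj k ∘L .proj j ∘L .proj i ∘L .snd ℝ _ _ ∘L .snd ℝ _ _

/-- The virtual work of the load with components `f = (f₀, f₁, f₂)`. -/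
def loadForm (f : BeamState) : BeamState →L[ℝ] ℝ :=
  ∑ i, f.1 i • coordU i + ∑ i, ∑ j, f.2.1 i j • coordP i j
    + ∑ i, ∑ j, ∑ k, f.2.2 i j k • coordN i j k

theorem continuous_loadForm : Continuous loadForm := by
  unfold loadForm
  fun_prop

theorem loadForm_apply (f x : BeamState) :
    loadForm f x = ∑ i, f.1 i * x.1 i + ∑ i, ∑ j, f.2.1 i j * x.2.1 i j
      + ∑ i, ∑ j, ∑ k, f.2.2 i j k * x.2.2 i j k := by
  simp [loadForm, coordU, coordP, coordN]

theorem iteratedDeriv_beamState {n : ℕ} {q : ℝ → BeamState} (hq : ContDiff ℝ n q) (t : ℝ) :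
    iteratedDeriv n q t = (fun i ↦ iteratedDeriv n (fun s ↦ (q s).1 i) t,
      fun i j ↦ iteratedDeriv n (fun s ↦ (q s).2.1 i j) t,
      fun i j k ↦ iteratedDeriv n (fun s ↦ (q s).2.2 i j k) t) := by
  ext i j k
  · exact (iteratedDeriv_clm_comp (coordU i) hq.contDiffAt).symm
  · exact (iteratedDeriv_clm_comp (coordP i j) hq.contDiffAt).symm
  · exact (iteratedDeriv_clm_comp (coordN i j k) hq.contDiffAt).symm

theorem deriv_beamState {q : ℝ → BeamState} (hq : ContDiff ℝ 1 q) (t : ℝ) :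
    deriv q t = (fun i ↦ deriv (fun s ↦ (q s).1 i) t, fun i j ↦ deriv (fun s ↦ (q s).2.1 i j) t,
      fun i j k ↦ deriv (fun s ↦ (q s).2.2 i j k) t) := by
  simpa only [iteratedDeriv_one] using iteratedDeriv_beamState hq t

theorem psiNonHolo_eq_quadraticAction (L : ℝ) (f : ℝ → BeamState) {q : ℝ → BeamState}
    (hq : ContDiff ℝ 1 q) :
    PsiNonHolo L a b c d e ℓ (fun t ↦ (f t).1) (fun t ↦ (f t).2.1) (fun t ↦ (f t).2.2)
      (fun t ↦ (q t).1) (fun t ↦ (q t).2.1) (fun t ↦ (q t).2.2) =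
      quadraticAction (internalWorkForm a b c d e ℓ) (fun t ↦ loadForm (f t)) 0 L q := by
  unfold PsiNonHolo quadraticAction
  congr 1 with t
  rw [deriv_beamState hq, loadForm_apply, internalWorkForm,
    IsBilinearMap.toContinuousBilinearMap_apply]
  simp only [internalWork, ← sq]
  ring

theorem eulerOperator_eq_loadForm_of_stationary {L : ℝ} {f q : ℝ → BeamState} (hf : Continuous f)
    (hq : ContDiff ℝ 2 q) (w : BeamState)
    (hstat : ∀ φ : ℝ → ℝ, ContDiff ℝ (⊤ : ℕ∞) φ → tsupport φ ⊆ Ioo 0 L →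
      deriv (fun s : ℝ ↦ PsiNonHolo L a b c d e ℓ
        (fun t ↦ (f t).1) (fun t ↦ (f t).2.1) (fun t ↦ (f t).2.2)
        (fun t ↦ (q t + s • φ t • w).1) (fun t ↦ (q t + s • φ t • w).2.1)
        (fun t ↦ (q t + s • φ t • w).2.2)) 0 = 0)
    {t : ℝ} (ht : t ∈ Ioo 0 L) :
    eulerOperator (internalWorkForm a b c d e ℓ) (q t) (deriv q t) (iteratedDeriv 2 q t) w =
      loadForm (f t) w := by
  refine eulerOperator_eq_of_quadraticAction_stationary (internalWork_comm a b c d e ℓ)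
    (continuous_loadForm.comp hf) hq w (fun φ hφ hsupp ↦ ?_) ht
  have hqs (s : ℝ) : ContDiff ℝ 1 fun t ↦ q t + s • φ t • w :=
    (hq.of_le one_le_two).add (((hφ.of_le (by norm_num)).smul contDiff_const).const_smul s)
  have energy_eq := funext fun s ↦
    psiNonHolo_eq_quadraticAction a b c d e ℓ L f (hqs s)
  exact energy_eq ▸ hstat φ hφ hsupp

theorem eulerOperator_single_u (x x' x'' : BeamState) (i : Fin 3) :
    eulerOperator (internalWorkForm a b c d e ℓ) x x' x'' (Pi.single i 1, 0, 0) =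
      -d * (x''.1 i - x'.2.1 i 0) := by
  simp [eulerOperator, internalWorkForm, internalWork, Pi.single_apply]

theorem eulerOperator_single_P (x x' x'' : BeamState) (i j : Fin 3) :
    eulerOperator (internalWorkForm a b c d e ℓ) x x' x''
        (0, Pi.single i (Pi.single j 1), 0) =
      a / 2 * (x.2.1 i j + x.2.1 j i) - d * (x'.1 i - x.2.1 i 0) * (if j = 0 then 1 else 0)
        - d * ℓ ^ 4 / 12 * (x''.2.1 i j - x'.2.2 i 0 j) * (if j = 0 then 0 else 1)
        - e * (x''.2.1 i j - x'.2.2 i j 0) := by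
  simp only [eulerOperator, internalWorkForm, IsBilinearMap.toContinuousBilinearMap_apply,
    internalWork, Pi.single_apply, ite_apply, Pi.zero_apply, mul_add, mul_ite, mul_one, mul_zero,
    Finset.sum_add_distrib, Finset.sum_ite_irrel, Finset.sum_ite_eq', Finset.mem_univ, ↓reduceIte,
    Finset.sum_const_zero, add_zero, Fin.isValue, eq_comm (a := (0 : Fin 3)), zero_sub, mul_neg,
    Finset.sum_neg_distrib, sub_self, sub_zero, mem_greek_iff, ne_eq, ite_not, zero_add]
  split_ifs <;> ring

theorem eulerOperator_single_N (x x' x'' : BeamState) (i j k : Fin 3) :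
    eulerOperator (internalWorkForm a b c d e ℓ) x x' x''
        (0, 0, Pi.single i (Pi.single j (Pi.single k 1))) =
      b * x.2.2 i j k - c * x''.2.2 i j k +
        if k = 0 then -e * (x'.2.1 i j - x.2.2 i j 0)
        else ℓ ^ 4 / 12 * (a / 2 * (x.2.2 i j k + x.2.2 j i k)
          - d * (x'.2.1 i k - x.2.2 i 0 k) * (if j = 0 then 1 else 0) - e * x''.2.2 i j k) := by
  simp only [eulerOperator, internalWorkForm, IsBilinearMap.toContinuousBilinearMap_apply,
    internalWork, Pi.zero_apply, add_zero, mul_zero, Finset.sum_const_zero, Pi.single_apply,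
    ite_apply, mul_add, mul_ite, mul_one, Finset.sum_add_distrib, Finset.sum_ite_irrel,
    Finset.sum_ite_eq', mem_greek_iff, Fin.isValue, ne_eq, ite_not, Finset.mem_univ, ↓reduceIte,
    zero_add, sub_self, eq_comm (a := (0 : Fin 3)), zero_sub, mul_neg, Finset.sum_neg_distrib,
    neg_mul]
  split_ifs <;> ring

theorem loadForm_single_u (f : BeamState) (i : Fin 3) :
    loadForm f (Pi.single i 1, 0, 0) = f.1 i := by
  simp [loadForm_apply, Pi.single_apply]

theorem loadForm_single_P (f : BeamState) (i j : Fin 3) :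
    loadForm f (0, Pi.single i (Pi.single j 1), 0) = f.2.1 i j := by
  simp [loadForm_apply, Pi.single_apply, ite_apply]

theorem loadForm_single_N (f : BeamState) (i j k : Fin 3) :
    loadForm f (0, 0, Pi.single i (Pi.single j (Pi.single k 1))) = f.2.2 i j k := by
  simp [loadForm_apply, Pi.single_apply, ite_apply]

end Beam

theorem statement5_general
    (L a b c d e ℓ : ℝ)
    (f₀ : ℝ → Fin 3 → ℝ) (f₁ : ℝ → Fin 3 → Fin 3 → ℝ)
    (f₂ : ℝ → Fin 3 → Fin 3 → Fin 3 → ℝ)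
    (hf₀ : ∀ i, Continuous (fun t ↦ f₀ t i))
    (hf₁ : ∀ i j, Continuous (fun t ↦ f₁ t i j))
    (hf₂ : ∀ i j k, Continuous (fun t ↦ f₂ t i j k))
    (u : ℝ → Fin 3 → ℝ) (P : ℝ → Fin 3 → Fin 3 → ℝ) (N : ℝ → Fin 3 → Fin 3 → Fin 3 → ℝ)
    (hu : ∀ i, ContDiff ℝ 2 (fun t ↦ u t i))
    (hP : ∀ i j, ContDiff ℝ 2 (fun t ↦ P t i j))
    (hN : ∀ i j k, ContDiff ℝ 2 (fun t ↦ N t i j k))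
    (hvar : ∀ (δu : ℝ → Fin 3 → ℝ) (δP : ℝ → Fin 3 → Fin 3 → ℝ)
        (δN : ℝ → Fin 3 → Fin 3 → Fin 3 → ℝ),
      (∀ i, ContDiff ℝ (⊤ : ℕ∞) (fun t ↦ δu t i)) →
      (∀ i j, ContDiff ℝ (⊤ : ℕ∞) (fun t ↦ δP t i j)) →
      (∀ i j k, ContDiff ℝ (⊤ : ℕ∞) (fun t ↦ δN t i j k)) →
      (∀ i, tsupport (fun t ↦ δu t i) ⊆ Ioo 0 L) →
      (∀ i j, tsupport (fun t ↦ δP t i j) ⊆ Ioo 0 L) →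
      (∀ i j k, tsupport (fun t ↦ δN t i j k) ⊆ Ioo 0 L) →
      deriv (fun s : ℝ ↦ PsiNonHolo L a b c d e ℓ f₀ f₁ f₂
        (fun t i ↦ u t i + s * δu t i)
        (fun t i j ↦ P t i j + s * δP t i j)
        (fun t i j k ↦ N t i j k + s * δN t i j k)) 0 = 0) :
    ∀ t ∈ Ioo 0 L, ∀ i j : Fin 3,
      (f₀ t i = -d * (iteratedDeriv 2 (fun s ↦ u s i) t - deriv (fun s ↦ P s i 0) t)) ∧
      (f₁ t i j = a / 2 * (P t i j + P t j i)
        - d * (deriv (fun s ↦ u s i) t - P t i 0) * (if j = 0 then 1 else 0)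
        - d * ℓ ^ 4 / 12
            * (iteratedDeriv 2 (fun s ↦ P s i j) t - deriv (fun s ↦ N s i 0 j) t)
            * (if j = 0 then 0 else 1)
        - e * (iteratedDeriv 2 (fun s ↦ P s i j) t - deriv (fun s ↦ N s i j 0) t)) ∧
      (f₂ t i j 0 = b * N t i j 0 - c * iteratedDeriv 2 (fun s ↦ N s i j 0) t
        - e * (deriv (fun s ↦ P s i j) t - N t i j 0)) ∧
      (∀ α : Fin 3, α ≠ 0 →
        f₂ t i j α = b * N t i j α - c * iteratedDeriv 2 (fun s ↦ N s i j α) t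
          + ℓ ^ 4 / 12 * (a / 2 * (N t i j α + N t j i α)
              - d * (deriv (fun s ↦ P s i α) t - N t i 0 α) * (if j = 0 then 1 else 0)
              - e * iteratedDeriv 2 (fun s ↦ N s i j α) t)) := by
  let q : ℝ → BeamState := fun t ↦ (u t, P t, N t)
  have hq : ContDiff ℝ 2 q := (contDiff_pi.2 hu).prodMk <|
    (contDiff_pi.2 fun i ↦ contDiff_pi.2 (hP i)).prodMk <|
      contDiff_pi.2 fun i ↦ contDiff_pi.2 fun j ↦ contDiff_pi.2 (hN i j)
  have hf : Continuous fun t ↦ ((f₀ t, f₁ t, f₂ t) : BeamState) := by fun_prop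
  have hsmooth {φ : ℝ → ℝ} (hφ : ContDiff ℝ (⊤ : ℕ∞) φ) (r : ℝ) :
      ContDiff ℝ (⊤ : ℕ∞) fun t ↦ φ t * r := hφ.mul contDiff_const
  have hsupport {φ : ℝ → ℝ} (hφ : tsupport φ ⊆ Ioo 0 L) (r : ℝ) :
      tsupport (fun t ↦ φ t * r) ⊆ Ioo 0 L :=
    (tsupport_mul_subset_left (f := φ) (g := fun _ ↦ r)).trans hφ
  intro t ht i j
  have equilibrium (w : BeamState) := eulerOperator_eq_loadForm_of_stationary a b c d e ℓ hf hq w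
    (fun φ hφ hsupp ↦ hvar (fun t i ↦ φ t * w.1 i) (fun t i j ↦ φ t * w.2.1 i j)
      (fun t i j k ↦ φ t * w.2.2 i j k) (fun _ ↦ hsmooth hφ _) (fun _ _ ↦ hsmooth hφ _)
      (fun _ _ _ ↦ hsmooth hφ _) (fun _ ↦ hsupport hsupp _) (fun _ _ ↦ hsupport hsupp _)
      (fun _ _ _ ↦ hsupport hsupp _)) ht
  rw [deriv_beamState (hq.of_le one_le_two), iteratedDeriv_beamState hq] at equilibrium
  have elN (k : Fin 3) := equilibrium (0, 0, Pi.single i (Pi.single j (Pi.single k 1)))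
  simp only [eulerOperator_single_N, loadForm_single_N] at elN
  refine ⟨?_, ?_, ?_, fun α hα ↦ ?_⟩
  · simpa only [eulerOperator_single_u, loadForm_single_u] using
      (equilibrium (Pi.single i 1, 0, 0)).symm
  · simpa only [eulerOperator_single_P, loadForm_single_P] using
      (equilibrium (0, Pi.single i (Pi.single j 1), 0)).symm
  · rw [← elN 0, if_pos rfl]
    ring
  · rw [← elN α, if_neg hα]

/-- If `(u, P, N)` are smooth and the first variation of the non-holonomic
energy `Ψ` vanishes for every smooth variation compactly supported in `(0, L)`, then
`(u, P, N)` satisfies the non-holonomic Euler–Lagrange equations (EL1)–(EL4) on `(0, L)`. -/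
theorem statement5
    (L a b c d e ℓ : ℝ) (hL : 0 < L) (ha : 0 < a) (hb : 0 < b) (hc : 0 < c)
    (hd : 0 < d) (he : 0 < e) (hℓ : 0 < ℓ)
    (f₀ : ℝ → Fin 3 → ℝ) (f₁ : ℝ → Fin 3 → Fin 3 → ℝ)
    (f₂ : ℝ → Fin 3 → Fin 3 → Fin 3 → ℝ)
    (hf₀ : ∀ i, Continuous (fun t => f₀ t i))
    (hf₁ : ∀ i j, Continuous (fun t => f₁ t i j))
    (hf₂ : ∀ i j k, Continuous (fun t => f₂ t i j k))
    (u : ℝ → Fin 3 → ℝ) (P : ℝ → Fin 3 → Fin 3 → ℝ) (N : ℝ → Fin 3 → Fin 3 → Fin 3 → ℝ)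
    (hu : ∀ i, ContDiff ℝ (⊤ : ℕ∞) (fun t => u t i))
    (hP : ∀ i j, ContDiff ℝ (⊤ : ℕ∞) (fun t => P t i j))
    (hN : ∀ i j k, ContDiff ℝ (⊤ : ℕ∞) (fun t => N t i j k))
    (hvar : ∀ (δu : ℝ → Fin 3 → ℝ) (δP : ℝ → Fin 3 → Fin 3 → ℝ)
        (δN : ℝ → Fin 3 → Fin 3 → Fin 3 → ℝ),
      (∀ i, ContDiff ℝ (⊤ : ℕ∞) (fun t => δu t i)) →
      (∀ i j, ContDiff ℝ (⊤ : ℕ∞) (fun t => δP t i j)) →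
      (∀ i j k, ContDiff ℝ (⊤ : ℕ∞) (fun t => δN t i j k)) →
      (∀ i, tsupport (fun t => δu t i) ⊆ Ioo (0:ℝ) L) →
      (∀ i j, tsupport (fun t => δP t i j) ⊆ Ioo (0:ℝ) L) →
      (∀ i j k, tsupport (fun t => δN t i j k) ⊆ Ioo (0:ℝ) L) →
      deriv (fun s : ℝ => PsiNonHolo L a b c d e ℓ f₀ f₁ f₂
        (fun t i => u t i + s * δu t i)
        (fun t i j => P t i j + s * δP t i j)
        (fun t i j k => N t i j k + s * δN t i j k)) 0 = 0) :
    ∀ t ∈ Ioo (0:ℝ) L, ∀ i j : Fin 3,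
      -- (EL1)
      (f₀ t i = -d * (iteratedDeriv 2 (fun s => u s i) t - deriv (fun s => P s i 0) t)) ∧
      -- (EL2)
      (f₁ t i j = a / 2 * (P t i j + P t j i)
        - d * (deriv (fun s => u s i) t - P t i 0) * (if j = 0 then 1 else 0)
        - d * ℓ ^ 4 / 12
            * (iteratedDeriv 2 (fun s => P s i j) t - deriv (fun s => N s i 0 j) t)
            * (if j = 0 then 0 else 1)
        - e * (iteratedDeriv 2 (fun s => P s i j) t - deriv (fun s => N s i j 0) t)) ∧
      -- (EL3)
      (f₂ t i j 0 = b * N t i j 0 - c * iteratedDeriv 2 (fun s => N s i j 0) t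
        - e * (deriv (fun s => P s i j) t - N t i j 0)) ∧
      -- (EL4)
      (∀ α : Fin 3, α ≠ 0 →
        f₂ t i j α = b * N t i j α - c * iteratedDeriv 2 (fun s => N s i j α) t
          + ℓ ^ 4 / 12 * (a / 2 * (N t i j α + N t j i α)
              - d * (deriv (fun s => P s i α) t - N t i 0 α) * (if j = 0 then 1 else 0)
              - e * iteratedDeriv 2 (fun s => N s i j α) t)) := by
  have two_le : (2 : WithTop ℕ∞) ≤ (⊤ : ℕ∞) := by norm_cast
  exact statement5_general L a b c d e ℓ f₀ f₁ f₂ hf₀ hf₁ hf₂ u P N (fun i ↦ (hu i).of_le two_le)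
    (fun i j ↦ (hP i j).of_le two_le) (fun i j k ↦ (hN i j k).of_le two_le) hvar
end

section
/- With the above definitions, the three-dimensional internal energy of the ansatz fields equals the homogenised one-dimensional energy: ∫_B [ (a/4)Σ_{i,j}(P^i_j+P^j_i)² + bΣ_{i,j,k}(N^i_{jk})² + cΣ_{i,j,k}(∂₁N^i_{jk})² + dΣ_i(∂₁u^i − P^i_1)² + eΣ_{i,j}(∂₁P^i_j − N^i_{j1})² ] dX = ∫₀ᴸ { |F|·[ (a/4)Σ_{i,j}(P̄^i_j+P̄^j_i)² + bΣ_{i,j,k}(N̄^i_{jk})² + cΣ_{i,j,k}((N̄^i_{jk})′)² + dΣ_i((ū^i)′ − P̄^i_1)² + eΣ_{i,j}((P̄^i_j)′ − N̄^i_{j1})² ] + (a/4)Σ_{i,j}(N̄^i_{jα}+N̄^j_{iα})(N̄^i_{jβ}+N̄^j_{iβ}) I^{αβ} + d Σ_i((P̄^i_α)′ − N̄^i_{1α})((P̄^i_β)′ − N̄^i_{1β}) I^{αβ} + e Σ_{i,j}(N̄^i_{jα})′(N̄^i_{jβ})′ I^{αβ} } dX¹, where repeated Greek indices α, β ∈ {2,3}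 are summed. -/
/-!
At a fixed `X¹`, every strain entering the energy is an affine function `A + B_α X^α` of the
transversal coordinates. Integrating its square over the cross-section yields `|F| A²` plus the
moments `B_α B_β I^{αβ}`, since the centroid condition kills the cross terms. The energy is a
linear combination of such squares, so Fubini's theorem on `[0, L] × F` does the rest.
-/

open Filter Set MeasureTheory

/-- The transversal coordinate `X^α` of a point of the fibre `F ⊂ ℝ²` (only used for
`α ∈ greek`): `Xc 1` is `X²` and `Xc 2` is `X³`. -/
def Xc (α : Fin 3) (y : ℝ × ℝ) : ℝ := if α = 1 then y.1 else y.2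

/-- The partial derivative `∂₁` in the longitudinal coordinate `X¹` of a scalar field on
`ℝ³ = ℝ × ℝ × ℝ`. -/
noncomputable def d1 (f : ℝ × ℝ × ℝ → ℝ) (x : ℝ × ℝ × ℝ) : ℝ :=
  deriv (fun s => f (s, x.2)) x.1

section AffineField

variable {Y κ : Type*} {s : Finset κ} {X : κ → Y → ℝ}

/-- The scalar field `A + B_α X^α` on the cross-section, affine in the coordinate functions `X`,
with the repeated index `α` summed over `s`. -/
def affineField (s : Finset κ) (X : κ → Y → ℝ) (A : ℝ) (B : κ → ℝ) (y : Y) : ℝ :=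
  A + ∑ α ∈ s, B α * X α y

theorem affineField_add (A A' : ℝ) (B B' : κ → ℝ) (y : Y) :
    affineField s X A B y + affineField s X A' B' y = affineField s X (A + A') (B + B') y := by
  simp only [affineField, Pi.add_apply, add_mul, Finset.sum_add_distrib]
  ring

theorem affineField_sub (A A' : ℝ) (B B' : κ → ℝ) (y : Y) :
    affineField s X A B y - affineField s X A' B' y = affineField s X (A - A') (B - B') y := by
  simp only [affineField, Pi.sub_apply, sub_mul, Finset.sum_sub_distrib]
  ring

theorem affineField_sub_const (A A' : ℝ) (B : κ → ℝ) (y : Y) :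
    affineField s X A B y - A' = affineField s X (A - A') B y :=
  add_sub_right_comm ..

theorem affineField_sq (A : ℝ) (B : κ → ℝ) (y : Y) :
    affineField s X A B y ^ 2 =
      A ^ 2 + 2 * A * ∑ α ∈ s, B α * X α y + ∑ α ∈ s, ∑ β ∈ s, B α * B β * (X α y * X β y) := by
  rw [affineField, add_sq, sq (∑ α ∈ s, B α * X α y), Finset.sum_mul_sum]
  simp only [mul_mul_mul_comm]

theorem deriv_affineField {A : ℝ → ℝ} {B : ℝ → κ → ℝ} {t : ℝ} (hA : DifferentiableAt ℝ A t)
    (hB : ∀ α ∈ s, DifferentiableAt ℝ (fun r => B r α) t) (y : Y) :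
    deriv (fun r => affineField s X (A r) (B r) y) t =
      affineField s X (deriv A t) (fun α => deriv (fun r => B r α) t) y :=
  (hA.hasDerivAt.add <| HasDerivAt.fun_sum fun α hα =>
    (hB α hα).hasDerivAt.mul_const (X α y)).deriv

variable [MeasurableSpace Y] {μ : Measure Y}

theorem memLp_affineField [IsFiniteMeasure μ] {p : ENNReal}
    (hX : ∀ α ∈ s, MemLp (X α) p μ) (A : ℝ) (B : κ → ℝ) : MemLp (affineField s X A B) p μ :=
  (memLp_const A).add <| memLp_finsetSum s fun α hα => (hX α hα).const_mul (B α)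

theorem integral_affineField_sq [IsFiniteMeasure μ] (hX : ∀ α ∈ s, MemLp (X α) 2 μ)
    (hX₀ : ∀ α ∈ s, ∫ y, X α y ∂μ = 0) (A : ℝ) (B : κ → ℝ) :
    ∫ y, affineField s X A B y ^ 2 ∂μ =
      μ.real univ * A ^ 2 + ∑ α ∈ s, ∑ β ∈ s, B α * B β * ∫ y, X α y * X β y ∂μ := by
  have linear_integrable : ∀ α ∈ s, Integrable (fun y => B α * X α y) μ :=
    fun α hα => ((hX α hα).integrable one_le_two).const_mul _
  have quadratic_integrable :
      ∀ α ∈ s, ∀ β ∈ s, Integrable (fun y => B α * B β * (X α y * X β y)) μ :=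
    fun α hα β hβ => ((hX α hα).integrable_mul (hX β hβ)).const_mul _
  have linear_sum_integrable : Integrable (fun y => ∑ α ∈ s, B α * X α y) μ :=
    integrable_finsetSum s linear_integrable
  have quadratic_row_integrable :
      ∀ α ∈ s, Integrable (fun y => ∑ β ∈ s, B α * B β * (X α y * X β y)) μ :=
    fun α hα => integrable_finsetSum s (quadratic_integrable α hα)
  have quadratic_sum_integrable := integrable_finsetSum s quadratic_row_integrable
  have integral_linear : ∫ y, ∑ α ∈ s, B α * X α y ∂μ = 0 := by
    rw [integral_finsetSum s linear_integrable]
    refine Finset.sum_eq_zero fun α hα => ?_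
    rw [integral_const_mul, hX₀ α hα, mul_zero]
  have integral_quadratic : ∫ y, ∑ α ∈ s, ∑ β ∈ s, B α * B β * (X α y * X β y) ∂μ =
      ∑ α ∈ s, ∑ β ∈ s, B α * B β * ∫ y, X α y * X β y ∂μ := by
    rw [integral_finsetSum s quadratic_row_integrable]
    refine Finset.sum_congr rfl fun α hα => ?_
    simp only [integral_finsetSum s (quadratic_integrable α hα), integral_const_mul]
  simp only [affineField_sq]
  rw [integral_add (by fun_prop) quadratic_sum_integrable,
    integral_add (by fun_prop) (linear_sum_integrable.const_mul _),
    integral_const_mul, integral_linear, integral_quadratic, integral_const, smul_eq_mul, mul_zero,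
    add_zero]

theorem integrable_sum_affineField_sq [IsFiniteMeasure μ] {m : Type*} [Fintype m]
    (hX : ∀ α ∈ s, MemLp (X α) 2 μ) (A : m → ℝ) (B : m → κ → ℝ) :
    Integrable (fun y => ∑ i, affineField s X (A i) (B i) y ^ 2) μ :=
  integrable_finsetSum _ fun i _ => (memLp_affineField hX (A i) (B i)).integrable_sq

theorem integral_sum_affineField_sq [IsFiniteMeasure μ] {m : Type*} [Fintype m]
    (hX : ∀ α ∈ s, MemLp (X α) 2 μ) (hX₀ : ∀ α ∈ s, ∫ y, X α y ∂μ = 0) (A : m → ℝ)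
    (B : m → κ → ℝ) :
    ∫ y, ∑ i, affineField s X (A i) (B i) y ^ 2 ∂μ =
      μ.real univ * ∑ i, A i ^ 2 +
        ∑ i, ∑ α ∈ s, ∑ β ∈ s, B i α * B i β * ∫ y, X α y * X β y ∂μ := by
  rw [integral_finsetSum _ fun i _ => (memLp_affineField hX (A i) (B i)).integrable_sq]
  simp only [integral_affineField_sq hX hX₀, Finset.sum_add_distrib, Finset.mul_sum]

variable {T : Type*} [MeasurableSpace T] {ν : Measure T}

theorem memLp_two_mul_prod [SFinite μ] {f : T → ℝ} {g : Y → ℝ} (hf : MemLp f 2 ν)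
    (hg : MemLp g 2 μ) : MemLp (fun x : T × Y => f x.1 * g x.2) 2 (ν.prod μ) :=
  (memLp_two_iff_integrable_sq
    (hf.aestronglyMeasurable.comp_fst.mul hg.aestronglyMeasurable.comp_snd)).2 <| by
      simpa only [Pi.mul_apply, mul_pow] using hf.integrable_sq.mul_prod hg.integrable_sq

theorem memLp_two_affineField_prod [IsFiniteMeasure μ] (hX : ∀ α ∈ s, MemLp (X α) 2 μ)
    {A : T → ℝ} {B : T → κ → ℝ} (hA : MemLp A 2 ν) (hB : ∀ α ∈ s, MemLp (fun t => B t α) 2 ν) :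
    MemLp (fun x : T × Y => affineField s X (A x.1) (B x.1) x.2) 2 (ν.prod μ) :=
  (hA.comp_fst μ).add <| memLp_finsetSum s fun α hα => memLp_two_mul_prod (hB α hα) (hX α hα)

end AffineField

/-- The values at a point on which the internal energy depends: the fields `P`, `N` and the
longitudinal derivatives `du`, `dP`, `dN` of `u`, `P`, `N`. -/
@[ext]
structure Jet (ι : Type*) where
  P : ι → ι → ℝ
  N : ι → ι → ι → ℝ
  du : ι → ℝ
  dP : ι → ι → ℝ
  dN : ι → ι → ι → ℝ

namespace Jet

variable {ι Y : Type*}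

/-- The jet produced at the point `y` of the cross-section by the ansatz whose unidimensional fields
have jet `J`: the coefficients of `u` are those of `P`, and the coefficients of `P` those of `N`. -/
def ansatz (s : Finset ι) (X : ι → Y → ℝ) (J : Jet ι) (y : Y) : Jet ι where
  P i j := affineField s X (J.P i j) (J.N i j) y
  N := J.N
  du i := affineField s X (J.du i) (J.dP i) y
  dP i j := affineField s X (J.dP i j) (J.dN i j) y
  dN := J.dN

variable [Fintype ι]

/-- The internal energy density, with `l` the longitudinal index. -/
noncomputable def energyDensity (a b c d e : ℝ) (l : ι) (J : Jet ι) : ℝ :=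
  a / 4 * ∑ i, ∑ j, (J.P i j + J.P j i) ^ 2
    + b * ∑ i, ∑ j, ∑ k, J.N i j k ^ 2
    + c * ∑ i, ∑ j, ∑ k, J.dN i j k ^ 2
    + d * ∑ i, (J.du i - J.P i l) ^ 2
    + e * ∑ i, ∑ j, (J.dP i j - J.N i j l) ^ 2

/-- The homogenised energy density for a cross-section of area `A` and second moments `M α β`, the
paper's `|F|` and `I^{αβ}`. -/
noncomputable def homogenisedDensity (a b c d e : ℝ) (l : ι) (s : Finset ι) (A : ℝ)
    (M : ι → ι → ℝ) (J : Jet ι) : ℝ :=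
  A * energyDensity a b c d e l J
    + a / 4 * ∑ i, ∑ j, ∑ α ∈ s, ∑ β ∈ s,
        (J.N i j α + J.N j i α) * (J.N i j β + J.N j i β) * M α β
    + d * ∑ i, ∑ α ∈ s, ∑ β ∈ s, (J.dP i α - J.N i l α) * (J.dP i β - J.N i l β) * M α β
    + e * ∑ i, ∑ j, ∑ α ∈ s, ∑ β ∈ s, J.dN i j α * J.dN i j β * M α β

theorem energyDensity_ansatz (a b c d e : ℝ) (l : ι) (s : Finset ι) (X : ι → Y → ℝ) (J : Jet ι)
    (y : Y) :
    energyDensity a b c d e l (J.ansatz s X y) =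
      a / 4 * ∑ i, ∑ j, affineField s X (J.P i j + J.P j i) (J.N i j + J.N j i) y ^ 2
        + b * ∑ i, ∑ j, ∑ k, J.N i j k ^ 2
        + c * ∑ i, ∑ j, ∑ k, J.dN i j k ^ 2
        + d * ∑ i, affineField s X (J.du i - J.P i l) (J.dP i - J.N i l) y ^ 2
        + e * ∑ i, ∑ j, affineField s X (J.dP i j - J.N i j l) (J.dN i j) y ^ 2 := by
  simp only [energyDensity, ansatz, affineField_add, affineField_sub]
  -- A separate pass: `affineField_sub_const` also matches the difference of two affine fields.
  simp only [affineField_sub_const]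

variable [MeasurableSpace Y] {μ : Measure Y}

theorem integral_energyDensity_ansatz [IsFiniteMeasure μ] {s : Finset ι} {X : ι → Y → ℝ}
    (hX : ∀ α ∈ s, MemLp (X α) 2 μ) (hX₀ : ∀ α ∈ s, ∫ y, X α y ∂μ = 0) (a b c d e : ℝ) (l : ι)
    (J : Jet ι) :
    ∫ y, energyDensity a b c d e l (J.ansatz s X y) ∂μ =
      homogenisedDensity a b c d e l s (μ.real univ) (fun α β => ∫ y, X α y * X β y ∂μ) J := by
  have integrable_double (A : ι → ι → ℝ) (B : ι → ι → ι → ℝ) :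
      Integrable (fun y => ∑ i, ∑ j, affineField s X (A i j) (B i j) y ^ 2) μ := by
    simpa only [Fintype.sum_prod_type] using
      integrable_sum_affineField_sq hX (fun p : ι × ι => A p.1 p.2) (fun p => B p.1 p.2)
  have integral_double (A : ι → ι → ℝ) (B : ι → ι → ι → ℝ) :
      ∫ y, ∑ i, ∑ j, affineField s X (A i j) (B i j) y ^ 2 ∂μ =
        μ.real univ * ∑ i, ∑ j, A i j ^ 2 +
          ∑ i, ∑ j, ∑ α ∈ s, ∑ β ∈ s, B i j α * B i j β * ∫ y, X α y * X β y ∂μ := by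
    simpa only [Fintype.sum_prod_type] using
      integral_sum_affineField_sq hX hX₀ (fun p : ι × ι => A p.1 p.2) (fun p => B p.1 p.2)
  have hP := (integrable_double (fun i j => J.P i j + J.P j i)
    (fun i j => J.N i j + J.N j i)).const_mul (a / 4)
  have hdu := (integrable_sum_affineField_sq hX (fun i => J.du i - J.P i l)
    (fun i => J.dP i - J.N i l)).const_mul d
  have hdP := (integrable_double (fun i j => J.dP i j - J.N i j l) J.dN).const_mul e
  have hconst (r : ℝ) : Integrable (fun _ => r) μ := integrable_const r
  simp only [energyDensity_ansatz]
  rw [integral_add (((hP.fun_add (hconst _)).fun_add (hconst _)).fun_add hdu) hdP,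
    integral_add ((hP.fun_add (hconst _)).fun_add (hconst _)) hdu,
    integral_add (hP.fun_add (hconst _)) (hconst _), integral_add hP (hconst _)]
  simp only [integral_const_mul, integral_const, smul_eq_mul, integral_double,
    integral_sum_affineField_sq hX hX₀, energyDensity, homogenisedDensity, Pi.add_apply,
    Pi.sub_apply]
  ring

theorem integrable_energyDensity {J : Y → Jet ι} (hP : ∀ i j, MemLp (fun y => (J y).P i j) 2 μ)
    (hN : ∀ i j k, MemLp (fun y => (J y).N i j k) 2 μ)
    (hdu : ∀ i, MemLp (fun y => (J y).du i) 2 μ) (hdP : ∀ i j, MemLp (fun y => (J y).dP i j) 2 μ)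
    (hdN : ∀ i j k, MemLp (fun y => (J y).dN i j k) 2 μ) (a b c d e : ℝ) (l : ι) :
    Integrable (fun y => energyDensity a b c d e l (J y)) μ := by
  have hsym (i j : ι) := ((hP i j).add (hP j i)).integrable_sq
  have hN₂ (i j k : ι) := (hN i j k).integrable_sq
  have hdN₂ (i j k : ι) := (hdN i j k).integrable_sq
  have hdu₂ (i : ι) := ((hdu i).sub (hP i l)).integrable_sq
  have hdP₂ (i j : ι) := ((hdP i j).sub (hN i j l)).integrable_sq
  simp only [Pi.add_apply, Pi.sub_apply] at hsym hdu₂ hdP₂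
  unfold energyDensity
  fun_prop

end Jet

/-- The jet at `t` of fields along a longitudinal line. It serves both for the unidimensional fields
and for the restrictions of the fields on `ℝ × Y` to the lines `ℝ × {y}`. -/
noncomputable def lineJet {ι : Type*} (u : ℝ → ι → ℝ) (P : ℝ → ι → ι → ℝ) (N : ℝ → ι → ι → ι → ℝ)
    (t : ℝ) : Jet ι where
  P := P t
  N := N t
  du i := deriv (fun r => u r i) t
  dP i j := deriv (fun r => P r i j) t
  dN i j k := deriv (fun r => N r i j k) t

/-- `f` is differentiable almost everywhere and its classical derivative is square integrable. -/
structure HasL2Deriv (f : ℝ → ℝ) (ν : Measure ℝ) : Prop where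
  ae_differentiableAt : ∀ᵐ t ∂ν, DifferentiableAt ℝ f t
  memLp_deriv : MemLp (deriv f) 2 ν

section Homogenisation

open Jet

variable {ι Y : Type*}

theorem lineJet_affineField {s : Finset ι} {X : ι → Y → ℝ} {u : ℝ → ι → ℝ} {P : ℝ → ι → ι → ℝ}
    {N : ℝ → ι → ι → ι → ℝ} {t : ℝ} (hu : ∀ i, DifferentiableAt ℝ (fun r => u r i) t)
    (hP : ∀ i j, DifferentiableAt ℝ (fun r => P r i j) t)
    (hN : ∀ i j k, DifferentiableAt ℝ (fun r => N r i j k) t) (y : Y) :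
    lineJet (fun r i => affineField s X (u r i) (P r i) y)
        (fun r i j => affineField s X (P r i j) (N r i j) y) N t =
      (lineJet u P N t).ansatz s X y := by
  ext i
  · rfl
  · rfl
  · exact deriv_affineField (hu i) (fun α _ => hP i α) y
  · exact deriv_affineField (hP i _) (fun α _ => hN i _ α) y
  · rfl

theorem ae_lineJet_affineField [Countable ι] [MeasurableSpace Y] {ν : Measure ℝ} {μ : Measure Y}
    [SFinite μ] {s : Finset ι} {X : ι → Y → ℝ} {u : ℝ → ι → ℝ} {P : ℝ → ι → ι → ℝ}
    {N : ℝ → ι → ι → ι → ℝ} (hu : ∀ i, ∀ᵐ t ∂ν, DifferentiableAt ℝ (fun r => u r i) t)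
    (hP : ∀ i j, ∀ᵐ t ∂ν, DifferentiableAt ℝ (fun r => P r i j) t)
    (hN : ∀ i j k, ∀ᵐ t ∂ν, DifferentiableAt ℝ (fun r => N r i j k) t) :
    ∀ᵐ x ∂ν.prod μ,
      lineJet (fun r i => affineField s X (u r i) (P r i) x.2)
          (fun r i j => affineField s X (P r i j) (N r i j) x.2) N x.1 =
        (lineJet u P N x.1).ansatz s X x.2 := by
  have differentiable : ∀ᵐ t ∂ν, (∀ i, DifferentiableAt ℝ (fun r => u r i) t) ∧
      (∀ i j, DifferentiableAt ℝ (fun r => P r i j) t) ∧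
      (∀ i j k, DifferentiableAt ℝ (fun r => N r i j k) t) := by
    simp only [eventually_and, ae_all_iff]
    exact ⟨hu, hP, hN⟩
  filter_upwards [Measure.quasiMeasurePreserving_fst.ae differentiable] with x ⟨hux, hPx, hNx⟩
  exact lineJet_affineField hux hPx hNx x.2

variable [Fintype ι] [MeasurableSpace Y] {ν : Measure ℝ} {μ : Measure Y}
  {s : Finset ι} {X : ι → Y → ℝ} {ub : ℝ → ι → ℝ} {Pb : ℝ → ι → ι → ℝ} {Nb : ℝ → ι → ι → ι → ℝ}

theorem integrable_energyDensity_ansatz_lineJet [IsFiniteMeasure μ]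
    (hX : ∀ α ∈ s, MemLp (X α) 2 μ) (hub : ∀ i, MemLp (deriv fun t => ub t i) 2 ν)
    (hPb : ∀ i j, MemLp (fun t => Pb t i j) 2 ν)
    (hPb' : ∀ i j, MemLp (deriv fun t => Pb t i j) 2 ν)
    (hNb : ∀ i j k, MemLp (fun t => Nb t i j k) 2 ν)
    (hNb' : ∀ i j k, MemLp (deriv fun t => Nb t i j k) 2 ν) (a b c d e : ℝ) (l : ι) :
    Integrable (fun x : ℝ × Y =>
      energyDensity a b c d e l ((lineJet ub Pb Nb x.1).ansatz s X x.2)) (ν.prod μ) :=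
  integrable_energyDensity
    (fun i j => memLp_two_affineField_prod hX (hPb i j) fun α _ => hNb i j α)
    (fun i j k => (hNb i j k).comp_fst μ)
    (fun i => memLp_two_affineField_prod hX (hub i) fun α _ => hPb' i α)
    (fun i j => memLp_two_affineField_prod hX (hPb' i j) fun α _ => hNb' i j α)
    (fun i j k => (hNb' i j k).comp_fst μ) a b c d e l

theorem statement8_general [SFinite ν] [IsFiniteMeasure μ] (a b c d e : ℝ) (l : ι)
    (hX : ∀ α ∈ s, MemLp (X α) 2 μ) (hX₀ : ∀ α ∈ s, ∫ y, X α y ∂μ = 0)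
    (hub' : ∀ i, HasL2Deriv (fun t => ub t i) ν)
    (hPb : ∀ i j, MemLp (fun t => Pb t i j) 2 ν) (hPb' : ∀ i j, HasL2Deriv (fun t => Pb t i j) ν)
    (hNb : ∀ i j k, MemLp (fun t => Nb t i j k) 2 ν)
    (hNb' : ∀ i j k, HasL2Deriv (fun t => Nb t i j k) ν)
    {u : ℝ × Y → ι → ℝ} {P : ℝ × Y → ι → ι → ℝ} {N : ℝ × Y → ι → ι → ι → ℝ}
    (hu : ∀ x i, u x i = affineField s X (ub x.1 i) (Pb x.1 i) x.2)
    (hP : ∀ x i j, P x i j = affineField s X (Pb x.1 i j) (Nb x.1 i j) x.2)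
    (hN : ∀ x i j k, N x i j k = Nb x.1 i j k) :
    ∫ x, energyDensity a b c d e l
        (lineJet (fun r => u (r, x.2)) (fun r => P (r, x.2)) (fun r => N (r, x.2)) x.1) ∂ν.prod μ =
      ∫ t, homogenisedDensity a b c d e l s (μ.real univ) (fun α β => ∫ y, X α y * X β y ∂μ)
        (lineJet ub Pb Nb t) ∂ν := by
  obtain rfl : u = fun x i => affineField s X (ub x.1 i) (Pb x.1 i) x.2 := funext₂ hu
  obtain rfl : P = fun x i j => affineField s X (Pb x.1 i j) (Nb x.1 i j) x.2 := funext₃ hP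
  obtain rfl : N = fun x => Nb x.1 := funext fun x => funext₃ (hN x)
  calc
    _ = ∫ x, energyDensity a b c d e l ((lineJet ub Pb Nb x.1).ansatz s X x.2) ∂ν.prod μ :=
      integral_congr_ae <| (ae_lineJet_affineField (fun i => (hub' i).ae_differentiableAt)
        (fun i j => (hPb' i j).ae_differentiableAt)
        (fun i j k => (hNb' i j k).ae_differentiableAt)).mono fun _ hx =>
          congrArg (energyDensity a b c d e l) hx
    _ = ∫ t, ∫ y, energyDensity a b c d e l ((lineJet ub Pb Nb t).ansatz s X y) ∂μ ∂ν :=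
      integral_prod _ <| integrable_energyDensity_ansatz_lineJet hX (fun i => (hub' i).memLp_deriv)
        hPb (fun i j => (hPb' i j).memLp_deriv) hNb (fun i j k => (hNb' i j k).memLp_deriv) ..
    _ = _ := by simp only [integral_energyDensity_ansatz hX hX₀]

end Homogenisation

theorem memLp_restrict_of_continuous {Z E : Type*} [PseudoMetricSpace Z] [ProperSpace Z]
    [MeasurableSpace Z] [OpensMeasurableSpace Z] [NormedAddCommGroup E] {μ : Measure Z}
    [IsFiniteMeasureOnCompacts μ] {S : Set Z} (hS : Bornology.IsBounded S) {f : Z → E}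
    (hf : Continuous f) (p : ENNReal) : MemLp f p (μ.restrict S) := by
  have : IsFiniteMeasure (μ.restrict (closure S)) :=
    isFiniteMeasure_restrict.2 hS.isCompact_closure.measure_lt_top.ne
  obtain ⟨C, hC⟩ := hS.isCompact_closure.exists_bound_of_continuousOn hf.continuousOn
  have bounded_on_closure : MemLp f p (μ.restrict (closure S)) :=
    .of_bound hf.aestronglyMeasurable C <|
      ae_restrict_of_forall_mem isClosed_closure.measurableSet hC
  exact bounded_on_closure.mono_measure (Measure.restrict_mono subset_closure le_rfl)

theorem hasL2Deriv_restrict_of_contDiff {ν : Measure ℝ} [IsFiniteMeasureOnCompacts ν] {S : Set ℝ}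
    (hS : Bornology.IsBounded S) {f : ℝ → ℝ} (hf : ContDiff ℝ 1 f) :
    HasL2Deriv f (ν.restrict S) where
  ae_differentiableAt := .of_forall (hf.differentiable one_ne_zero)
  memLp_deriv := memLp_restrict_of_continuous hS (hf.continuous_deriv le_rfl) 2

theorem continuous_Xc (α : Fin 3) : Continuous (Xc α) := by
  unfold Xc
  split_ifs <;> fun_prop

/-- For the ansatz fields
`u^i(X) = ū^i(X¹) + P̄^i_α(X¹)X^α`, `P^i_j(X) = P̄^i_j(X¹) + N̄^i_{jα}(X¹)X^α`,
`N^i_{jk}(X) = N̄^i_{jk}(X¹)` on `B = [0,L] × F`, with `F` bounded, measurable and centred,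
the three-dimensional internal energy equals the homogenised one-dimensional energy. -/
theorem statement8
    (L a b c d e : ℝ) (hL : 0 < L) (ha : 0 < a) (hb : 0 < b) (hc : 0 < c)
    (hd : 0 < d) (he : 0 < e)
    (F : Set (ℝ × ℝ)) (hFm : MeasurableSet F) (hFb : Bornology.IsBounded F)
    -- the centroid condition ∫_F X^α = 0
    (hctr : ∀ α ∈ greek, (∫ y in F, Xc α y) = 0)
    (ub : ℝ → Fin 3 → ℝ) (Pb : ℝ → Fin 3 → Fin 3 → ℝ) (Nb : ℝ → Fin 3 → Fin 3 → Fin 3 → ℝ)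
    (hub : ∀ i, ContDiff ℝ 1 (fun t => ub t i))
    (hPb : ∀ i j, ContDiff ℝ 1 (fun t => Pb t i j))
    (hNb : ∀ i j k, ContDiff ℝ 1 (fun t => Nb t i j k))
    -- the ansatz fields on B
    (u : ℝ × ℝ × ℝ → Fin 3 → ℝ) (P : ℝ × ℝ × ℝ → Fin 3 → Fin 3 → ℝ)
    (N : ℝ × ℝ × ℝ → Fin 3 → Fin 3 → Fin 3 → ℝ)
    (hu : ∀ x i, u x i = ub x.1 i + ∑ α ∈ greek, Pb x.1 i α * Xc α x.2)
    (hP : ∀ x i j, P x i j = Pb x.1 i j + ∑ α ∈ greek, Nb x.1 i j α * Xc α x.2)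
    (hN : ∀ x i j k, N x i j k = Nb x.1 i j k) :
    (∫ x in (Icc (0:ℝ) L) ×ˢ F,
      (a / 4 * ∑ i : Fin 3, ∑ j : Fin 3, (P x i j + P x j i) ^ 2
        + b * ∑ i : Fin 3, ∑ j : Fin 3, ∑ k : Fin 3, (N x i j k) ^ 2
        + c * ∑ i : Fin 3, ∑ j : Fin 3, ∑ k : Fin 3, (d1 (fun y => N y i j k) x) ^ 2
        + d * ∑ i : Fin 3, (d1 (fun y => u y i) x - P x i 0) ^ 2
        + e * ∑ i : Fin 3, ∑ j : Fin 3, (d1 (fun y => P y i j) x - N x i j 0) ^ 2))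
    =
    ∫ t in Icc (0:ℝ) L,
      ((volume F).toReal *
        (a / 4 * ∑ i : Fin 3, ∑ j : Fin 3, (Pb t i j + Pb t j i) ^ 2
          + b * ∑ i : Fin 3, ∑ j : Fin 3, ∑ k : Fin 3, (Nb t i j k) ^ 2
          + c * ∑ i : Fin 3, ∑ j : Fin 3, ∑ k : Fin 3, (deriv (fun s => Nb s i j k) t) ^ 2
          + d * ∑ i : Fin 3, (deriv (fun s => ub s i) t - Pb t i 0) ^ 2
          + e * ∑ i : Fin 3, ∑ j : Fin 3,
              (deriv (fun s => Pb s i j) t - Nb t i j 0) ^ 2)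
        + a / 4 * ∑ i : Fin 3, ∑ j : Fin 3, ∑ α ∈ greek, ∑ β ∈ greek,
            (Nb t i j α + Nb t j i α) * (Nb t i j β + Nb t j i β)
              * (∫ y in F, Xc α y * Xc β y)
        + d * ∑ i : Fin 3, ∑ α ∈ greek, ∑ β ∈ greek,
            (deriv (fun s => Pb s i α) t - Nb t i 0 α)
              * (deriv (fun s => Pb s i β) t - Nb t i 0 β)
              * (∫ y in F, Xc α y * Xc β y)
        + e * ∑ i : Fin 3, ∑ j : Fin 3, ∑ α ∈ greek, ∑ β ∈ greek,
            deriv (fun s => Nb s i j α) t * deriv (fun s => Nb s i j β) t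
              * (∫ y in F, Xc α y * Xc β y)) := by
  have hI : Bornology.IsBounded (Icc 0 L) := Metric.isBounded_Icc 0 L
  have : IsFiniteMeasure (volume.restrict F) := isFiniteMeasure_restrict.2 hFb.measure_lt_top.ne
  have h := statement8_general (ν := volume.restrict (Icc 0 L)) (μ := volume.restrict F)
    (s := greek) a b c d e 0
    (fun α _ => memLp_restrict_of_continuous hFb (continuous_Xc α) 2) hctr
    (fun i => hasL2Deriv_restrict_of_contDiff hI (hub i))
    (fun i j => memLp_restrict_of_continuous hI (hPb i j).continuous 2)
    (fun i j => hasL2Deriv_restrict_of_contDiff hI (hPb i j))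
    (fun i j k => memLp_restrict_of_continuous hI (hNb i j k).continuous 2)
    (fun i j k => hasL2Deriv_restrict_of_contDiff hI (hNb i j k)) hu hP hN
  rw [Measure.prod_restrict, ← Measure.volume_eq_prod, measureReal_restrict_apply_univ] at h
  exact h
end

section
/- Let u : [0,L] → ℝ³ be continuously differentiable, P : [0,L] → ℝ^{3×3} twice continuously differentiable, and let N : [0,L] → ℝ^{3×3×3} satisfy the semi-holonomic constraint N^i_{j1}(X¹) = (P^i_j)′(X¹) for all i, j and N^i_{jα}(X¹) = n̄^i_{jα} for constants n̄^i_{jα} (α ∈ {2,3}). Then, with I^{αβ} = (ℓ⁴/12)δ^{αβ}, the homogenised non-holonomic internal energy ∫₀ᴸ [ (a/4)Σ_{i,j}(P^i_j+P^j_i)² + (a ℓ⁴/48)Σ_{i,j,α}(N^i_{jα}+N^j_{iα})² + bΣ_{i,j,k}(N^i_{jk})² + cΣ_{i,j,k}((N^i_{jk})′)² + dΣ_i((u^i)′−P^i_1)² + (d ℓ⁴/12)Σ_{i,α}((P^i_α)′−N^i_{1α})² + eΣ_{i,j}((P^i_j)′−N^i_{j1})² + (e ℓ⁴/12)Σ_{i,j,α}((N^i_{jα})′)²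 ] dX¹ equals ∫₀ᴸ [ (a/4)Σ_{i,j}(P^i_j+P^j_i)² + bΣ_i((P^i_1)′)² + (b + d ℓ⁴/12)Σ_{i,α}((P^i_α)′)² + cΣ_{i,j}((P^i_j)″)² + dΣ_i((u^i)′−P^i_1)² − (d ℓ⁴/6)Σ_{i,α} n̄^i_{1α}(P^i_α)′ ] dX¹ + K, where K = L·[ (a ℓ⁴/48)Σ_{i,j,α}(n̄^i_{jα}+n̄^j_{iα})² + bΣ_{i,j,α}(n̄^i_{jα})² + (d ℓ⁴/12)Σ_{i,α}(n̄^i_{1α})² ] is a constant depending only on a, b, d, ℓ, L and the constants n̄^i_{jα}. -/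
open Filter Set intervalIntegral

/-!
The semi-holonomic constraint prescribes every entry of `N`, hence also of `N′`: the longitudinal
entries of `N′` are `(P^i_j)″` and the transversal ones vanish. Therefore both `e`-terms drop out,
and every sum over `N` or `N′` splits into a longitudinal part in `P′` or `P″` and a transversal
part in `n̄`. Only the term `(d ℓ⁴/12) ∑ ((P^i_α)′ − n̄^i_{1α})²` couples `P′` and `n̄`; expanding
its squares yields the cross term `−(d ℓ⁴/6) ∑ n̄^i_{1α} (P^i_α)′`.
-/

section

variable {ι : Type*}

/-- The pointwise semi-holonomic constraint `N^i_{jo} = A^i_j`, `N^i_{jα} = n^i_{jα}` for `α ≠ o`,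
where `o` is the longitudinal index. It is used with `A = P′` for `N` itself and with `A = P″`,
`n = 0` for `N′`. -/
structure IsSemiholonomic (o : ι) (A : ι → ι → ℝ) (n N : ι → ι → ι → ℝ) : Prop where
  longitudinal : ∀ i j, N i j o = A i j
  transversal : ∀ i j, ∀ α ≠ o, N i j α = n i j α

theorem IsSemiholonomic.deriv_of_isOpen {o : ι} {s : Set ℝ} (hs : IsOpen s) {P : ℝ → ι → ι → ℝ}
    {N : ℝ → ι → ι → ι → ℝ} {n : ι → ι → ι → ℝ}
    (h : ∀ t ∈ s, IsSemiholonomic o (fun i j => deriv (fun r => P r i j) t) n (N t))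
    {t : ℝ} (ht : t ∈ s) :
    IsSemiholonomic o (fun i j => iteratedDeriv 2 (fun r => P r i j) t) 0
      (fun i j k => deriv (fun r => N r i j k) t) where
  longitudinal i j := by
    have hEq : EqOn (fun r => N r i j o) (deriv fun r => P r i j) s :=
      fun r hr => (h r hr).longitudinal i j
    rw [hEq.deriv hs ht, iteratedDeriv_succ, iteratedDeriv_one]
  transversal i j α hα := by
    have hEq : EqOn (fun r => N r i j α) (fun _ => n i j α) s :=
      fun r hr => (h r hr).transversal i j α hα
    rw [hEq.deriv hs ht, deriv_const, Pi.zero_apply, Pi.zero_apply, Pi.zero_apply]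

variable [Fintype ι] [DecidableEq ι]

/-- The homogenised non-holonomic energy density, as a function of the values `du = u′`, `P`,
`dP = P′`, `N`, `dN = N′` at a point. The longitudinal index is `o`, and the transversal (Greek)
indices are the elements of `{o}ᶜ`. -/
noncomputable def nonholonomicDensity (a b c d e ℓ : ℝ) (o : ι) (du : ι → ℝ)
    (P dP : ι → ι → ℝ) (N dN : ι → ι → ι → ℝ) : ℝ :=
  a / 4 * ∑ i, ∑ j, (P i j + P j i) ^ 2
    + a * ℓ ^ 4 / 48 * ∑ i, ∑ j, ∑ α ∈ {o}ᶜ, (N i j α + N j i α) ^ 2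
    + b * ∑ i, ∑ j, ∑ k, N i j k ^ 2
    + c * ∑ i, ∑ j, ∑ k, dN i j k ^ 2
    + d * ∑ i, (du i - P i o) ^ 2
    + d * ℓ ^ 4 / 12 * ∑ i, ∑ α ∈ {o}ᶜ, (dP i α - N i o α) ^ 2
    + e * ∑ i, ∑ j, (dP i j - N i j o) ^ 2
    + e * ℓ ^ 4 / 12 * ∑ i, ∑ j, ∑ α ∈ {o}ᶜ, dN i j α ^ 2

/-- The semi-holonomic energy density, as a function of the values `du = u′`, `P`, `dP = P′`,
`ddP = P″` at a point. -/
noncomputable def semiholonomicDensity (a b c d ℓ : ℝ) (o : ι) (n : ι → ι → ι → ℝ)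
    (du : ι → ℝ) (P dP ddP : ι → ι → ℝ) : ℝ :=
  a / 4 * ∑ i, ∑ j, (P i j + P j i) ^ 2
    + b * ∑ i, dP i o ^ 2
    + (b + d * ℓ ^ 4 / 12) * ∑ i, ∑ α ∈ {o}ᶜ, dP i α ^ 2
    + c * ∑ i, ∑ j, ddP i j ^ 2
    + d * ∑ i, (du i - P i o) ^ 2
    - d * ℓ ^ 4 / 6 * ∑ i, ∑ α ∈ {o}ᶜ, n i o α * dP i α

/-- The energy per unit length stored in the prescribed transversal components `n`: the constant
`K` of the theorem is `L` times this. -/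
noncomputable def transversalDensity (a b d ℓ : ℝ) (o : ι) (n : ι → ι → ι → ℝ) : ℝ :=
  a * ℓ ^ 4 / 48 * ∑ i, ∑ j, ∑ α ∈ {o}ᶜ, (n i j α + n j i α) ^ 2
    + b * ∑ i, ∑ j, ∑ α ∈ {o}ᶜ, n i j α ^ 2
    + d * ℓ ^ 4 / 12 * ∑ i, ∑ α ∈ {o}ᶜ, n i o α ^ 2

namespace IsSemiholonomic

variable {o : ι} {A dA : ι → ι → ℝ} {n N dN : ι → ι → ι → ℝ}

theorem sum_transversal (h : IsSemiholonomic o A n N) (i j : ι) (f : ι → ℝ → ℝ) :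
    ∑ α ∈ {o}ᶜ, f α (N i j α) = ∑ α ∈ {o}ᶜ, f α (n i j α) :=
  Finset.sum_congr rfl fun α hα => by rw [h.transversal i j α (by simpa using hα)]

theorem sum_sq (h : IsSemiholonomic o A n N) :
    ∑ i, ∑ j, ∑ k, N i j k ^ 2 = ∑ i, ∑ j, A i j ^ 2 + ∑ i, ∑ j, ∑ α ∈ {o}ᶜ, n i j α ^ 2 := by
  simp only [Fintype.sum_eq_add_sum_compl o fun k => N _ _ k ^ 2, h.longitudinal,
    h.sum_transversal _ _ fun _ x => x ^ 2, Finset.sum_add_distrib]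

theorem sum_symm_sq (h : IsSemiholonomic o A n N) :
    ∑ i, ∑ j, ∑ α ∈ {o}ᶜ, (N i j α + N j i α) ^ 2
      = ∑ i, ∑ j, ∑ α ∈ {o}ᶜ, (n i j α + n j i α) ^ 2 := by
  refine Finset.sum_congr rfl fun i _ => Finset.sum_congr rfl fun j _ => ?_
  rw [h.sum_transversal i j fun α x => (x + N j i α) ^ 2,
    h.sum_transversal j i fun α x => (n i j α + x) ^ 2]

theorem sum_sub_sq (h : IsSemiholonomic o A n N) (B : ι → ι → ℝ) :
    ∑ i, ∑ α ∈ {o}ᶜ, (B i α - N i o α) ^ 2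
      = ∑ i, ∑ α ∈ {o}ᶜ, B i α ^ 2 - 2 * ∑ i, ∑ α ∈ {o}ᶜ, n i o α * B i α
        + ∑ i, ∑ α ∈ {o}ᶜ, n i o α ^ 2 := by
  have hn : ∑ i, ∑ α ∈ {o}ᶜ, (B i α - N i o α) ^ 2 = ∑ i, ∑ α ∈ {o}ᶜ, (B i α - n i o α) ^ 2 :=
    Finset.sum_congr rfl fun i _ => h.sum_transversal i o fun α x => (B i α - x) ^ 2
  rw [hn]
  simp only [Finset.mul_sum, ← Finset.sum_add_distrib, ← Finset.sum_sub_distrib]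
  exact Finset.sum_congr rfl fun i _ => Finset.sum_congr rfl fun α _ => by ring

theorem nonholonomicDensity_eq (h : IsSemiholonomic o A n N) (h' : IsSemiholonomic o dA 0 dN)
    (a b c d e ℓ : ℝ) (du : ι → ℝ) (P : ι → ι → ℝ) :
    nonholonomicDensity a b c d e ℓ o du P A N dN
      = semiholonomicDensity a b c d ℓ o n du P A dA + transversalDensity a b d ℓ o n := by
  have hdN : ∑ i, ∑ j, ∑ k, dN i j k ^ 2 = ∑ i, ∑ j, dA i j ^ 2 := by simp [h'.sum_sq]
  have hdNα : ∑ i, ∑ j, ∑ α ∈ {o}ᶜ, dN i j α ^ 2 = 0 := by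
    simp [h'.sum_transversal _ _ fun _ x => x ^ 2]
  have hrel : ∑ i, ∑ j, (A i j - N i j o) ^ 2 = 0 := by simp [h.longitudinal]
  have hA : ∑ i, ∑ j, A i j ^ 2 = ∑ i, A i o ^ 2 + ∑ i, ∑ α ∈ {o}ᶜ, A i α ^ 2 := by
    simp only [Fintype.sum_eq_add_sum_compl o fun j => A _ j ^ 2, Finset.sum_add_distrib]
  rw [nonholonomicDensity, semiholonomicDensity, transversalDensity, h.sum_symm_sq, h.sum_sq,
    hdN, h.sum_sub_sq, hrel, hdNα, hA]
  ring

end IsSemiholonomic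

theorem continuousOn_semiholonomicDensity {X : Type*} [TopologicalSpace X] {s : Set X}
    {du : X → ι → ℝ} {P dP ddP : X → ι → ι → ℝ} (hdu : ContinuousOn du s) (hP : ContinuousOn P s)
    (hdP : ContinuousOn dP s) (hddP : ContinuousOn ddP s) (a b c d ℓ : ℝ) (o : ι)
    (n : ι → ι → ι → ℝ) :
    ContinuousOn (fun x => semiholonomicDensity a b c d ℓ o n (du x) (P x) (dP x) (ddP x)) s := by
  unfold semiholonomicDensity
  fun_prop

theorem intervalIntegrable_semiholonomicDensity {x y : ℝ} (hxy : x < y) {u : ℝ → ι → ℝ}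
    {P : ℝ → ι → ι → ℝ} (hu : ∀ i, ContDiffOn ℝ 1 (fun t => u t i) (Icc x y))
    (hP : ∀ i j, ContDiffOn ℝ 2 (fun t => P t i j) (Icc x y)) (a b c d ℓ : ℝ) (o : ι)
    (n : ι → ι → ι → ℝ) :
    IntervalIntegrable (fun t => semiholonomicDensity a b c d ℓ o n
      (fun i => deriv (fun r => u r i) t) (P t) (fun i j => deriv (fun r => P r i j) t)
      (fun i j => iteratedDeriv 2 (fun r => P r i j) t)) MeasureTheory.volume x y := by
  have hI : UniqueDiffOn ℝ (Icc x y) := uniqueDiffOn_Icc hxy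
  -- One-sided derivatives are continuous up to the end points, where `deriv` may be junk.
  have hcont : ContinuousOn (fun t => semiholonomicDensity a b c d ℓ o n
      (fun i => derivWithin (fun r => u r i) (Icc x y) t) (P t)
      (fun i j => derivWithin (fun r => P r i j) (Icc x y) t)
      (fun i j => iteratedDerivWithin 2 (fun r => P r i j) (Icc x y) t)) (Icc x y) :=
    continuousOn_semiholonomicDensity
      (continuousOn_pi.2 fun i => (hu i).continuousOn_derivWithin hI le_rfl)
      (continuousOn_pi.2 fun i => continuousOn_pi.2 fun j => (hP i j).continuousOn)
      (continuousOn_pi.2 fun i => continuousOn_pi.2 fun j =>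
        (hP i j).continuousOn_derivWithin hI one_le_two)
      (continuousOn_pi.2 fun i => continuousOn_pi.2 fun j =>
        (hP i j).continuousOn_iteratedDerivWithin le_rfl hI) a b c d ℓ o n
  refine (hcont.intervalIntegrable_of_Icc hxy.le).congr_uIoo fun t ht => ?_
  rw [uIoo_of_le hxy.le] at ht
  have hnhds : Icc x y ∈ nhds t := Icc_mem_nhds ht.1 ht.2
  have hP2 (i j : ι) : iteratedDerivWithin 2 (fun r => P r i j) (Icc x y) t
      = iteratedDeriv 2 (fun r => P r i j) t :=
    iteratedDerivWithin_eq_iteratedDeriv hI ((hP i j).contDiffAt hnhds) (Ioo_subset_Icc_self ht)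
  simp only [derivWithin_of_mem_nhds hnhds, hP2]

theorem statement11_general {L : ℝ} (hL : 0 < L) (a b c d e ℓ : ℝ) (o : ι) {u : ℝ → ι → ℝ}
    {P : ℝ → ι → ι → ℝ} {N : ℝ → ι → ι → ι → ℝ} {n : ι → ι → ι → ℝ}
    (hu : ∀ i, ContDiffOn ℝ 1 (fun t => u t i) (Icc 0 L))
    (hP : ∀ i j, ContDiffOn ℝ 2 (fun t => P t i j) (Icc 0 L))
    (hN : ∀ t ∈ Ioo 0 L, IsSemiholonomic o (fun i j => deriv (fun r => P r i j) t) n (N t)) :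
    (∫ t in (0 : ℝ)..L, nonholonomicDensity a b c d e ℓ o
        (fun i => deriv (fun r => u r i) t) (P t) (fun i j => deriv (fun r => P r i j) t)
        (N t) (fun i j k => deriv (fun r => N r i j k) t))
      = (∫ t in (0 : ℝ)..L, semiholonomicDensity a b c d ℓ o n
          (fun i => deriv (fun r => u r i) t) (P t) (fun i j => deriv (fun r => P r i j) t)
          (fun i j => iteratedDeriv 2 (fun r => P r i j) t))
        + L * transversalDensity a b d ℓ o n := by
  rw [integral_congr_Ioo_of_le hL.le fun t ht =>
      (hN t ht).nonholonomicDensity_eq (.deriv_of_isOpen isOpen_Ioo hN ht) a b c d e ℓ _ _,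
    integral_add (intervalIntegrable_semiholonomicDensity hL hu hP a b c d ℓ o n)
      intervalIntegrable_const,
    integral_const, sub_zero, smul_eq_mul]

end

theorem greek_eq_compl : greek = {0}ᶜ := by decide

/-- Under the semi-holonomic constraint `N^i_{j1} = (P^i_j)′`,
`N^i_{jα} = n̄^i_{jα}` (constants), the homogenised non-holonomic internal energy reduces to
the semi-holonomic internal energy plus the explicit constant `K`. -/
theorem statement11
    (L a b c d e ℓ : ℝ) (hL : 0 < L) (ha : 0 < a) (hb : 0 < b) (hc : 0 < c)
    (hd : 0 < d) (he : 0 < e) (hℓ : 0 < ℓ)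
    (u : ℝ → Fin 3 → ℝ) (P : ℝ → Fin 3 → Fin 3 → ℝ) (N : ℝ → Fin 3 → Fin 3 → Fin 3 → ℝ)
    (nb : Fin 3 → Fin 3 → Fin 3 → ℝ)
    (hu : ∀ i, ContDiff ℝ 1 (fun t => u t i))
    (hP : ∀ i j, ContDiff ℝ 2 (fun t => P t i j))
    -- the semi-holonomic constraint
    (hN1 : ∀ t : ℝ, ∀ i j : Fin 3, N t i j 0 = deriv (fun s => P s i j) t)
    (hNα : ∀ t : ℝ, ∀ i j : Fin 3, ∀ α ∈ greek, N t i j α = nb i j α) :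
    (∫ t in (0:ℝ)..L,
      (a / 4 * ∑ i : Fin 3, ∑ j : Fin 3, (P t i j + P t j i) ^ 2
        + a * ℓ ^ 4 / 48 * ∑ i : Fin 3, ∑ j : Fin 3, ∑ α ∈ greek,
            (N t i j α + N t j i α) ^ 2
        + b * ∑ i : Fin 3, ∑ j : Fin 3, ∑ k : Fin 3, (N t i j k) ^ 2
        + c * ∑ i : Fin 3, ∑ j : Fin 3, ∑ k : Fin 3, (deriv (fun s => N s i j k) t) ^ 2
        + d * ∑ i : Fin 3, (deriv (fun s => u s i) t - P t i 0) ^ 2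
        + d * ℓ ^ 4 / 12 * ∑ i : Fin 3, ∑ α ∈ greek,
            (deriv (fun s => P s i α) t - N t i 0 α) ^ 2
        + e * ∑ i : Fin 3, ∑ j : Fin 3, (deriv (fun s => P s i j) t - N t i j 0) ^ 2
        + e * ℓ ^ 4 / 12 * ∑ i : Fin 3, ∑ j : Fin 3, ∑ α ∈ greek,
            (deriv (fun s => N s i j α) t) ^ 2))
    =
    (∫ t in (0:ℝ)..L,
      (a / 4 * ∑ i : Fin 3, ∑ j : Fin 3, (P t i j + P t j i) ^ 2
        + b * ∑ i : Fin 3, (deriv (fun s => P s i 0) t) ^ 2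
        + (b + d * ℓ ^ 4 / 12) * ∑ i : Fin 3, ∑ α ∈ greek, (deriv (fun s => P s i α) t) ^ 2
        + c * ∑ i : Fin 3, ∑ j : Fin 3, (iteratedDeriv 2 (fun s => P s i j) t) ^ 2
        + d * ∑ i : Fin 3, (deriv (fun s => u s i) t - P t i 0) ^ 2
        - d * ℓ ^ 4 / 6 * ∑ i : Fin 3, ∑ α ∈ greek, nb i 0 α * deriv (fun s => P s i α) t))
    + L * (a * ℓ ^ 4 / 48 * ∑ i : Fin 3, ∑ j : Fin 3, ∑ α ∈ greek,
            (nb i j α + nb j i α) ^ 2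
        + b * ∑ i : Fin 3, ∑ j : Fin 3, ∑ α ∈ greek, (nb i j α) ^ 2
        + d * ℓ ^ 4 / 12 * ∑ i : Fin 3, ∑ α ∈ greek, (nb i 0 α) ^ 2) := by
  rw [greek_eq_compl] at hNα ⊢
  exact statement11_general hL a b c d e ℓ 0 (fun i => (hu i).contDiffOn)
    (fun i j => (hP i j).contDiffOn)
    fun t _ => ⟨hN1 t, fun i j α hα => hNα t i j α (by simpa using hα)⟩
end
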